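/- arXiv:1910.01901 — 3 statements merged into one kernel-verified Lean document; each statement's English description precedes it below -/
import Mathlib

section
/- Let F_S, F_R, F_C, F_N be finite-dimensional real vector spaces with duals E_S, E_R, E_C, E_N. Let J : E_S → F_S be linear and skew-symmetric (e₁(J e₂) = -e₂(J e₁) for all e₁, e₂ ∈ E_S), and for α ∈ {R, C, N} let G_α : F_α → F_S be linear with dual map G_α* : E_S → E_α characterized by (G_α* e)(f) = e(G_α f). Then the subspace D := {(f_S, f_R, f_C, f_N, e_S, e_R, e_C, e_N) : f_S = -J e_S - G_R f_R - G_C f_C - G_N f_N, e_R = G_R* e_S, e_C = G_C* e_S, e_N = G_N* e_S} satisfies D = D⊥ with respect to the pairing ⟨⟨(f,e),(f̄,ē)⟩⟩ := e_S(f̄_S) + ē_S(f_S) + e_R(f̄_R) + ē_R(f_R) + e_C(f̄_C) + ē_C(f_C) + e_N(f̄_N) + ē_N(f_N); that is, D is a Dirac structure (kernel representation of the port-Hamiltonian Dirac structure with storage, resistive, control and noise ports). -/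
variable (FS FR FC FN : Type*)
  [AddCommGroup FS] [Module ℝ FS] [FiniteDimensional ℝ FS]
  [AddCommGroup FR] [Module ℝ FR] [FiniteDimensional ℝ FR]
  [AddCommGroup FC] [Module ℝ FC] [FiniteDimensional ℝ FC]
  [AddCommGroup FN] [Module ℝ FN] [FiniteDimensional ℝ FN]

/-- The total space of port variables `(f_S, f_R, f_C, f_N, e_S, e_R, e_C, e_N)`. -/
abbrev PortSpace :=
  FS × FR × FC × FN ×
    Module.Dual ℝ FS × Module.Dual ℝ FR × Module.Dual ℝ FC × Module.Dual ℝ FN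

/-- Kernel representation of the port-Hamiltonian Dirac structure with
storage, resistive, control and noise ports. -/
def diracKernel (J : Module.Dual ℝ FS →ₗ[ℝ] FS)
    (GR : FR →ₗ[ℝ] FS) (GC : FC →ₗ[ℝ] FS) (GN : FN →ₗ[ℝ] FS)
    (GRs : Module.Dual ℝ FS →ₗ[ℝ] Module.Dual ℝ FR)
    (GCs : Module.Dual ℝ FS →ₗ[ℝ] Module.Dual ℝ FC)
    (GNs : Module.Dual ℝ FS →ₗ[ℝ] Module.Dual ℝ FN) :
    Set (PortSpace FS FR FC FN) :=
  {p | p.1 = -J p.2.2.2.2.1 - GR p.2.1 - GC p.2.2.1 - GN p.2.2.2.1 ∧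
       p.2.2.2.2.2.1 = GRs p.2.2.2.2.1 ∧
       p.2.2.2.2.2.2.1 = GCs p.2.2.2.2.1 ∧
       p.2.2.2.2.2.2.2 = GNs p.2.2.2.2.1}

/-- The symmetric bilinear pairing obtained by summing the duality pairings
over the four ports. -/
def portPairing (p q : PortSpace FS FR FC FN) : ℝ :=
  p.2.2.2.2.1 q.1 + q.2.2.2.2.1 p.1 +
  p.2.2.2.2.2.1 q.2.1 + q.2.2.2.2.2.1 p.2.1 +
  p.2.2.2.2.2.2.1 q.2.2.1 + q.2.2.2.2.2.2.1 p.2.2.1 +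
  p.2.2.2.2.2.2.2 q.2.2.2.1 + q.2.2.2.2.2.2.2 p.2.2.2.1

/-- The kernel representation with storage, resistive, control and noise ports
is a Dirac structure: it equals its orthogonal complement with respect to the
summed duality pairing. -/
theorem kernel_representation_four_ports_is_dirac
    (J : Module.Dual ℝ FS →ₗ[ℝ] FS)
    (hJ : ∀ e₁ e₂ : Module.Dual ℝ FS, e₁ (J e₂) = - e₂ (J e₁))
    (GR : FR →ₗ[ℝ] FS) (GC : FC →ₗ[ℝ] FS) (GN : FN →ₗ[ℝ] FS)
    (GRs : Module.Dual ℝ FS →ₗ[ℝ] Module.Dual ℝ FR)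
    (GCs : Module.Dual ℝ FS →ₗ[ℝ] Module.Dual ℝ FC)
    (GNs : Module.Dual ℝ FS →ₗ[ℝ] Module.Dual ℝ FN)
    (hGRs : ∀ (e : Module.Dual ℝ FS) (f : FR), GRs e f = e (GR f))
    (hGCs : ∀ (e : Module.Dual ℝ FS) (f : FC), GCs e f = e (GC f))
    (hGNs : ∀ (e : Module.Dual ℝ FS) (f : FN), GNs e f = e (GN f)) :
    diracKernel FS FR FC FN J GR GC GN GRs GCs GNs =
      {p : PortSpace FS FR FC FN |
        ∀ q ∈ diracKernel FS FR FC FN J GR GC GN GRs GCs GNs,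
          portPairing FS FR FC FN p q = 0} := by
  ext ⟨fS, fR, fC, fN, eS, eR, eC, eN⟩
  simp only [diracKernel, portPairing, Set.mem_setOf_eq]
  constructor
  · rintro ⟨h1, h2, h3, h4⟩ ⟨gS, gR, gC, gN, dS, dR, dC, dN⟩ ⟨k1, k2, k3, k4⟩
    dsimp only at *
    subst h1 h2 h3 h4 k1 k2 k3 k4
    simp only [map_sub, map_neg, hGRs, hGCs, hGNs]
    have := hJ eS dS
    linarith
  · intro h
    refine ⟨?_, ?_, ?_, ?_⟩
    · rw [← sub_eq_zero, ← Module.forall_dual_apply_eq_zero_iff ℝ]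
      intro d
      have := h (-J d, 0, 0, 0, d, GRs d, GCs d, GNs d) (by simp)
      simp only [map_sub, map_neg, map_zero, hGRs, hGCs, hGNs] at this ⊢
      have := hJ eS d
      linarith
    · ext x
      have := h (-GR x, x, 0, 0, 0, 0, 0, 0) (by simp)
      simp only [map_neg, map_zero, hGRs, LinearMap.zero_apply] at this ⊢
      linarith
    · ext x
      have := h (-GC x, 0, x, 0, 0, 0, 0, 0) (by simp)
      simp only [map_neg, map_zero, hGCs, LinearMap.zero_apply] at this ⊢
      linarith
    · ext x
      have := h (-GN x, 0, 0, x, 0, 0, 0, 0) (by simp)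
      simp only [map_neg, map_zero, hGNs, LinearMap.zero_apply] at this ⊢
      linarith
end

section
/- Let V_A, V_B and F be finite-dimensional real vector spaces with duals V_A*, V_B*, F*. Let D_A ⊆ V_A × V_A* × F × F* be a Dirac structure (D_A = D_A⊥ with respect to the pairing ⟨⟨(v,α,f,e),(v̄,ᾱ,f̄,ē)⟩⟩ := α(v̄) + ᾱ(v) + e(f̄) + ē(f)) and let D_B ⊆ V_B × V_B* × F × F* be a Dirac structure for the analogous pairing. Define the composition D_A ∘ D_B := {(v_A, α_A, v_B, α_B) ∈ V_A × V_A* × V_B × V_B* : there exist f ∈ F and e ∈ F* with (v_A, α_A, -f, e) ∈ D_A and (v_B, α_B, f, e) ∈ D_B}. Then D_A ∘ D_B is a Dirac structure on V_A × V_B, i.e. D_A ∘ D_B = (D_A ∘ D_B)⊥ with respect to the pairing ⟨⟨(v_A,α_A,v_B,α_B),(v̄_A,ᾱ_A,v̄_B,ᾱ_B)⟩⟩ := α_A(v̄_A) + ᾱ_A(v_A) + α_B(v̄_B) + ᾱ_B(v_B). -/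
variable (VA VB F : Type*)
  [AddCommGroup VA] [Module ℝ VA] [FiniteDimensional ℝ VA]
  [AddCommGroup VB] [Module ℝ VB] [FiniteDimensional ℝ VB]
  [AddCommGroup F] [Module ℝ F] [FiniteDimensional ℝ F]

/-- Pairing on `V × V* × F × F*` obtained summing the duality pairings. -/
def pairingWithPort (p q : VA × Module.Dual ℝ VA × F × Module.Dual ℝ F) : ℝ :=
  p.2.1 q.1 + q.2.1 p.1 + p.2.2.2 q.2.2.1 + q.2.2.2 p.2.2.1

/-- Pairing on `V_A × V_A* × V_B × V_B*` obtained summing the duality pairings. -/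
def pairingAB (p q : VA × Module.Dual ℝ VA × VB × Module.Dual ℝ VB) : ℝ :=
  p.2.1 q.1 + q.2.1 p.1 + p.2.2.2 q.2.2.1 + q.2.2.2 p.2.2.1

/-- A functional vanishing on the kernel of `T` factors through `T`. -/
theorem exists_factor_functional {E W : Type*} [AddCommGroup E] [Module ℝ E]
    [AddCommGroup W] [Module ℝ W] (T : E →ₗ[ℝ] W) (φ : E →ₗ[ℝ] ℝ)
    (h : ∀ x, T x = 0 → φ x = 0) : ∃ ψ : W →ₗ[ℝ] ℝ, ∀ x, ψ (T x) = φ x := by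
  have hφ : φ ∈ LinearMap.range T.dualMap := by
    rw [LinearMap.range_dualMap_eq_dualAnnihilator_ker, Submodule.mem_dualAnnihilator]
    intro x hx
    exact h x hx
  obtain ⟨ψ, hψ⟩ := hφ
  exact ⟨ψ, fun x => LinearMap.congr_fun hψ x⟩

/-- A set equal to its orthogonal complement is (the carrier of) a subspace. -/
theorem exists_submodule_of_self_orthogonal
    (D : Set (VA × Module.Dual ℝ VA × F × Module.Dual ℝ F))
    (hD : D = {p | ∀ q ∈ D, pairingWithPort VA F p q = 0}) :
    ∃ S : Submodule ℝ (VA × Module.Dual ℝ VA × F × Module.Dual ℝ F), ∀ p, p ∈ S ↔ p ∈ D := by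
  have key : ∀ p, p ∈ D ↔ ∀ q ∈ D, pairingWithPort VA F p q = 0 := fun p =>
    Set.ext_iff.mp hD p
  refine ⟨{ carrier := D, add_mem' := ?_, zero_mem' := ?_, smul_mem' := ?_ }, fun p => Iff.rfl⟩
  · intro a b ha hb
    rw [key] at ha hb ⊢
    intro q hq
    have h1 := ha q hq
    have h2 := hb q hq
    simp only [pairingWithPort, Prod.fst_add, Prod.snd_add, LinearMap.add_apply, map_add] at *
    linarith
  · rw [key]
    intro q hq
    simp [pairingWithPort]
  · intro c a ha
    rw [key] at ha ⊢
    intro q hq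
    have h1 := ha q hq
    simp only [pairingWithPort, Prod.smul_fst, Prod.smul_snd, LinearMap.smul_apply, map_smul,
      smul_eq_mul] at *
    linear_combination c * h1

/-- The functional on `V × V* × F × F*` given by pairing with `(v, α)` on the `V` port. -/
def portFunctional (v : VA) (α : Module.Dual ℝ VA) :
    (VA × Module.Dual ℝ VA × F × Module.Dual ℝ F) →ₗ[ℝ] ℝ where
  toFun q := α q.1 + q.2.1 v
  map_add' a b := by simp; ring
  map_smul' c a := by simp; ring

/-- The composition of two Dirac structures `D_A ⊆ V_A × V_A* × F × F*` and
`D_B ⊆ V_B × V_B* × F × F*` through the shared port `F × F*`, obtained by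
imposing `f_A = -f_B` and `e_A = e_B` and eliminating the shared variables,
is again a Dirac structure. -/
theorem composition_of_dirac_structures_is_dirac
    (DA : Set (VA × Module.Dual ℝ VA × F × Module.Dual ℝ F))
    (DB : Set (VB × Module.Dual ℝ VB × F × Module.Dual ℝ F))
    (hDA : DA = {p | ∀ q ∈ DA, pairingWithPort VA F p q = 0})
    (hDB : DB = {p | ∀ q ∈ DB, pairingWithPort VB F p q = 0}) :
    {r : VA × Module.Dual ℝ VA × VB × Module.Dual ℝ VB |
        ∃ (f : F) (e : Module.Dual ℝ F),
          (r.1, r.2.1, -f, e) ∈ DA ∧ (r.2.2.1, r.2.2.2, f, e) ∈ DB} =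
      {p : VA × Module.Dual ℝ VA × VB × Module.Dual ℝ VB |
        ∀ q ∈ {r : VA × Module.Dual ℝ VA × VB × Module.Dual ℝ VB |
            ∃ (f : F) (e : Module.Dual ℝ F),
              (r.1, r.2.1, -f, e) ∈ DA ∧ (r.2.2.1, r.2.2.2, f, e) ∈ DB},
          pairingAB VA VB p q = 0} := by
  have keyA : ∀ p, p ∈ DA ↔ ∀ q ∈ DA, pairingWithPort VA F p q = 0 := fun p =>
    Set.ext_iff.mp hDA p
  have keyB : ∀ p, p ∈ DB ↔ ∀ q ∈ DB, pairingWithPort VB F p q = 0 := fun p =>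
    Set.ext_iff.mp hDB p
  obtain ⟨SA, hSA⟩ := exists_submodule_of_self_orthogonal VA F DA hDA
  obtain ⟨SB, hSB⟩ := exists_submodule_of_self_orthogonal VB F DB hDB
  ext ⟨vA, αA, vB, αB⟩
  simp only [Set.mem_ofPred_eq]
  constructor
  · rintro ⟨f, e, hA, hB⟩ ⟨wA, βA, wB, βB⟩ ⟨f', e', hA', hB'⟩
    have h1 := (keyA _).1 hA _ hA'
    have h2 := (keyB _).1 hB _ hB'
    simp only [pairingWithPort, pairingAB, map_neg] at *
    linarith
  · intro h
    let T : (SA × SB) →ₗ[ℝ] (F × Module.Dual ℝ F) :=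
      { toFun := fun x => (x.1.1.2.2.1 + x.2.1.2.2.1, x.1.1.2.2.2 - x.2.1.2.2.2)
        map_add' := by
          intro x y
          ext1
          · simp; abel
          · simp; abel
        map_smul' := by
          intro c x
          ext1
          · simp
          · simp [smul_sub] }
    let φ : Module.Dual ℝ (SA × SB) :=
      (portFunctional VA F vA αA ∘ₗ SA.subtype).coprod (portFunctional VB F vB αB ∘ₗ SB.subtype)
    have hφ : ∀ x, T x = 0 → φ x = 0 := by
      rintro ⟨⟨⟨wA, βA, fA, eA⟩, ha⟩, ⟨⟨wB, βB, fB, eB⟩, hb⟩⟩ hk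
      have hk' : fA + fB = 0 ∧ eA - eB = 0 := by
        simpa [T] using hk
      obtain ⟨hf, he⟩ := hk'
      obtain rfl := eq_neg_of_add_eq_zero_left hf
      obtain rfl := sub_eq_zero.1 he
      have := h (wA, βA, wB, βB) ⟨fB, eA, (hSA _).1 ha, (hSB _).1 hb⟩
      simp only [pairingAB] at this
      simp only [φ, portFunctional, LinearMap.coprod_apply, LinearMap.comp_apply,
        Submodule.subtype_apply, LinearMap.coe_mk, AddHom.coe_mk]
      linarith
    obtain ⟨ψ, hψ⟩ := exists_factor_functional (E := SA × SB) (W := F × Module.Dual ℝ F) T φ hφ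
    obtain ⟨x, hx⟩ := (Module.evalEquiv ℝ F).surjective (ψ ∘ₗ LinearMap.inr ℝ _ _)
    have hx' : ∀ e, ψ (0, e) = e x := fun e => by
      simpa using (LinearMap.congr_fun hx e).symm
    have hsplit : ∀ f e, ψ (f, e) = ψ (f, 0) + e x := fun f e => by
      rw [← hx', ← map_add]; simp
    refine ⟨x, -(ψ ∘ₗ LinearMap.inl ℝ _ _), ?_, ?_⟩
    · rw [keyA]
      rintro ⟨w, β, f, e⟩ hq
      have := hψ (⟨_, (hSA _).2 hq⟩, 0)
      simp [T, φ, portFunctional] at this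
      rw [hsplit] at this
      simp [pairingWithPort]
      linarith
    · rw [keyB]
      rintro ⟨w, β, f, e⟩ hq
      have := hψ (0, ⟨_, (hSB _).2 hq⟩)
      simp [T, φ, portFunctional] at this
      rw [hsplit] at this
      simp [pairingWithPort] at this ⊢
      linarith
end

section
/- Let N be a positive natural number and for each i ∈ {1,…,N} let V_i and F_i be finite-dimensional real vector spaces, and let F be a further finite-dimensional real vector space. Suppose for each i that D_i ⊆ V_i × V_i* × F_i × F_i* is a Dirac structure (with respect to the summed duality pairing), and that D_I ⊆ (∏_i (F_i × F_i*)) × F × F* is a Dirac structure (the interconnection structure). Define D ⊆ (∏_i V_i) × (∏_i V_i*) × F × F* as the set of tuples ((v_i)_i, (α_i)_i, f, e) for which there exist (φ_i)_i ∈ ∏_i F_i and (ε_i)_i ∈ ∏_i F_i* such that (v_i, α_i, -φ_i, ε_i) ∈ D_i for every i and ((φ_i, ε_i)_i, f, e) ∈ D_I. Then D is a Dirac structure on (∏_i V_i) × F; hence the power-preserving interconnection of N port-Hamiltonian systems through an interconnection Dirac structure is again a port-Hamiltonian system, with Dirac structure D and Hamiltonian H := Σ_i H_i. -/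
open Finset


namespace PHS

section
variable {ι : Type*} [Fintype ι] (W : ι → Type*) [∀ i, AddCommGroup (W i)] [∀ i, Module ℝ (W i)]

/-- Summed duality pairing on a product of flow-effort spaces. -/
noncomputable def pr :
    ((∀ i, W i) × (∀ i, Module.Dual ℝ (W i))) →ₗ[ℝ]
      ((∀ i, W i) × (∀ i, Module.Dual ℝ (W i))) →ₗ[ℝ] ℝ :=
  LinearMap.mk₂ ℝ (fun p q => ∑ i, (p.2 i (q.1 i) + q.2 i (p.1 i)))
    (by intros; simp only [← Finset.sum_add_distrib]
        refine Finset.sum_congr rfl fun i _ => ?_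
        simp; ring)
    (by intros; simp only [smul_eq_mul, Finset.mul_sum]
        refine Finset.sum_congr rfl fun i _ => ?_
        simp; ring)
    (by intros; simp only [← Finset.sum_add_distrib]
        refine Finset.sum_congr rfl fun i _ => ?_
        simp; ring)
    (by intros; simp only [smul_eq_mul, Finset.mul_sum]
        refine Finset.sum_congr rfl fun i _ => ?_
        simp; ring)

theorem pr_apply (p q) : pr W p q = ∑ i, (p.2 i (q.1 i) + q.2 i (p.1 i)) := rfl

theorem pr_single [DecidableEq ι] (p : (∀ i, W i) × (∀ i, Module.Dual ℝ (W i))) (i : ι)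
    (w : W i) (η : Module.Dual ℝ (W i)) :
    pr W p (Pi.single i w, Pi.single i η) = p.2 i w + η (p.1 i) := by
  rw [pr_apply, Finset.sum_eq_single i]
  · simp
  · intro j _ hj
    simp [Pi.single_eq_of_ne hj]
  · simp

theorem pr_nondeg (p : (∀ i, W i) × (∀ i, Module.Dual ℝ (W i)))
    (h : ∀ q, pr W p q = 0) : p = 0 := by
  classical
  refine Prod.ext (funext fun i => ?_) (funext fun i => ?_)
  · refine (Module.forall_dual_apply_eq_zero_iff ℝ _).1 fun η => ?_
    have := h (Pi.single i 0, Pi.single i η)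
    rw [pr_single] at this
    simpa using this
  · refine LinearMap.ext fun w => ?_
    have := h (Pi.single i w, Pi.single i 0)
    rw [pr_single] at this
    simpa using this

end

/-- Duality pairing on a single flow-effort space. -/
noncomputable def pr1 (F : Type*) [AddCommGroup F] [Module ℝ F] :
    (F × Module.Dual ℝ F) →ₗ[ℝ] (F × Module.Dual ℝ F) →ₗ[ℝ] ℝ :=
  LinearMap.mk₂ ℝ (fun p q => p.2 q.1 + q.2 p.1)
    (by intros; simp; ring) (by intros; simp; ring)
    (by intros; simp; ring) (by intros; simp; ring)

theorem pr1_apply (F : Type*) [AddCommGroup F] [Module ℝ F] (p q : F × Module.Dual ℝ F) :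
    pr1 F p q = p.2 q.1 + q.2 p.1 := rfl

theorem pr1_nondeg (F : Type*) [AddCommGroup F] [Module ℝ F] (p : F × Module.Dual ℝ F)
    (h : ∀ q, pr1 F p q = 0) : p = 0 := by
  refine Prod.ext ?_ ?_
  · refine (Module.forall_dual_apply_eq_zero_iff ℝ _).1 fun η => ?_
    simpa [pr1_apply] using h (0, η)
  · refine LinearMap.ext fun w => ?_
    simpa [pr1_apply] using h (w, 0)

/-- Orthogonal sum of four bilinear forms. -/
noncomputable def sum4 {A B C D : Type*} [AddCommGroup A] [Module ℝ A] [AddCommGroup B]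
    [Module ℝ B] [AddCommGroup C] [Module ℝ C] [AddCommGroup D] [Module ℝ D]
    (a : A →ₗ[ℝ] A →ₗ[ℝ] ℝ) (b : B →ₗ[ℝ] B →ₗ[ℝ] ℝ)
    (c : C →ₗ[ℝ] C →ₗ[ℝ] ℝ) (d : D →ₗ[ℝ] D →ₗ[ℝ] ℝ) :
    (A × B × C × D) →ₗ[ℝ] (A × B × C × D) →ₗ[ℝ] ℝ :=
  LinearMap.mk₂ ℝ (fun p q => a p.1 q.1 + b p.2.1 q.2.1 + c p.2.2.1 q.2.2.1 + d p.2.2.2 q.2.2.2)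
    (by intros; simp; ring) (by intros; simp; ring)
    (by intros; simp; ring) (by intros; simp; ring)

theorem sum4_apply {A B C D : Type*} [AddCommGroup A] [Module ℝ A] [AddCommGroup B]
    [Module ℝ B] [AddCommGroup C] [Module ℝ C] [AddCommGroup D] [Module ℝ D]
    (a : A →ₗ[ℝ] A →ₗ[ℝ] ℝ) (b : B →ₗ[ℝ] B →ₗ[ℝ] ℝ)
    (c : C →ₗ[ℝ] C →ₗ[ℝ] ℝ) (d : D →ₗ[ℝ] D →ₗ[ℝ] ℝ) (p q : A × B × C × D) :
    sum4 a b c d p q =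
      a p.1 q.1 + b p.2.1 q.2.1 + c p.2.2.1 q.2.2.1 + d p.2.2.2 q.2.2.2 := rfl

/-- Abstract reduction lemma. -/
theorem reduction {E : Type*} [AddCommGroup E] [Module ℝ E] [FiniteDimensional ℝ E]
    (B : E →ₗ[ℝ] E →ₗ[ℝ] ℝ) (hB : ∀ x, (∀ y, B x y = 0) → x = 0)
    (L C : Submodule ℝ E) (hL : ∀ x, (∀ y ∈ L, B x y = 0) → x ∈ L)
    (p : E) (hp : ∀ y ∈ L, y ∈ C → B p y = 0) :
    ∃ d ∈ L, ∀ y ∈ C, B (p - d) y = 0 := by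
  have hinj : Function.Injective (B : E →ₗ[ℝ] Module.Dual ℝ E) := by
    rw [injective_iff_map_eq_zero]
    intro x hx
    exact hB x fun y => by rw [hx]; rfl
  have hsurj : Function.Surjective (B : E →ₗ[ℝ] Module.Dual ℝ E) :=
    (LinearMap.injective_iff_surjective_of_finrank_eq_finrank
      (Subspace.dual_finrank_eq).symm).1 hinj
  have hmem : (B p : Module.Dual ℝ E) ∈ (L ⊓ C).dualAnnihilator := by
    rw [Submodule.mem_dualAnnihilator]
    exact fun y hy => hp y hy.1 hy.2
  rw [Subspace.dualAnnihilator_inf_eq, Submodule.mem_sup] at hmem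
  obtain ⟨g₁, h₁, g₂, h₂, h⟩ := hmem
  obtain ⟨d, rfl⟩ := hsurj g₁
  rw [Submodule.mem_dualAnnihilator] at h₁ h₂
  refine ⟨d, hL d h₁, fun y hy => ?_⟩
  have e : B (p - d) = g₂ := by rw [map_sub, ← h]; simp
  rw [e]
  exact h₂ y hy

end PHS

/-- The power-preserving interconnection of `N` port-Hamiltonian systems, with
Dirac structures `Ds i ⊆ V_i × V_i* × F_i × F_i*`, through an interconnection
Dirac structure `DI ⊆ (∏ i, F_i × F_i*) × F × F*`, is again a Dirac structure
on `(∏ i, V_i) × F` (hence defines a port-Hamiltonian system with Hamiltonian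
`H = Σ_i H_i`). -/
theorem interconnection_of_PHS_is_PHS
    (N : ℕ) (hN : 0 < N)
    (V Fp : Fin N → Type*)
    [∀ i, AddCommGroup (V i)] [∀ i, Module ℝ (V i)] [∀ i, FiniteDimensional ℝ (V i)]
    [∀ i, AddCommGroup (Fp i)] [∀ i, Module ℝ (Fp i)] [∀ i, FiniteDimensional ℝ (Fp i)]
    (F : Type*) [AddCommGroup F] [Module ℝ F] [FiniteDimensional ℝ F]
    (Ds : ∀ i, Set (V i × Module.Dual ℝ (V i) × Fp i × Module.Dual ℝ (Fp i)))
    (hDs : ∀ i, Ds i = {p | ∀ q ∈ Ds i,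
        p.2.1 q.1 + q.2.1 p.1 + p.2.2.2 q.2.2.1 + q.2.2.2 p.2.2.1 = 0})
    (DI : Set ((∀ i, Fp i × Module.Dual ℝ (Fp i)) × F × Module.Dual ℝ F))
    (hDI : DI = {p | ∀ q ∈ DI,
        (∑ i, ((p.1 i).2 (q.1 i).1 + (q.1 i).2 (p.1 i).1)) +
          p.2.2 q.2.1 + q.2.2 p.2.1 = 0}) :
    letI D : Set ((∀ i, V i) × (∀ i, Module.Dual ℝ (V i)) × F × Module.Dual ℝ F) :=
      {p | ∃ (φ : ∀ i, Fp i) (ε : ∀ i, Module.Dual ℝ (Fp i)),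
        (∀ i, (p.1 i, p.2.1 i, -φ i, ε i) ∈ Ds i) ∧
          ((fun i => (φ i, ε i)), p.2.2.1, p.2.2.2) ∈ DI}
    D = {p | ∀ q ∈ D,
        (∑ i, (p.2.1 i (q.1 i) + q.2.1 i (p.1 i))) +
          p.2.2.2 q.2.2.1 + q.2.2.2 p.2.2.1 = 0} := by
  classical
  have hDs' : ∀ i p, p ∈ Ds i ↔ ∀ q ∈ Ds i,
      p.2.1 q.1 + q.2.1 p.1 + p.2.2.2 q.2.2.1 + q.2.2.2 p.2.2.1 = 0 := by
    intro i p
    exact Set.ext_iff.1 (hDs i) p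
  have hDI' : ∀ p, p ∈ DI ↔ ∀ q ∈ DI,
      (∑ i, ((p.1 i).2 (q.1 i).1 + (q.1 i).2 (p.1 i).1)) +
          p.2.2 q.2.1 + q.2.2 p.2.1 = 0 := fun p => Set.ext_iff.1 hDI p
  have h0 : ∀ i, (0, 0, 0, 0) ∈ Ds i := fun i => (hDs' i _).2 (by simp)
  have h0I : ((fun _ => (0, 0)), 0, 0) ∈ DI := (hDI' _).2 (by simp)
  ext p
  constructor
  · rintro ⟨φ, ε, h1, h2⟩ q ⟨φ', ε', h1', h2'⟩
    have A := fun i => (hDs' i _).1 (h1 i) _ (h1' i)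
    have B := (hDI' _).1 h2 _ h2'
    have A' := Finset.sum_congr (rfl : (Finset.univ : Finset (Fin N)) = _) fun i _ => A i
    simp only [map_neg, Finset.sum_add_distrib, Finset.sum_neg_distrib,
      Finset.sum_const_zero] at A' B ⊢
    linarith
  · intro hp
    let B := PHS.sum4 (PHS.pr V) (PHS.pr Fp) (PHS.pr Fp) (PHS.pr1 F)
    let S : Set (((∀ i, V i) × (∀ i, Module.Dual ℝ (V i))) ×
        ((∀ i, Fp i) × (∀ i, Module.Dual ℝ (Fp i))) ×
        ((∀ i, Fp i) × (∀ i, Module.Dual ℝ (Fp i))) × (F × Module.Dual ℝ F)) :=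
      {x | (∀ i, (x.1.1 i, x.1.2 i, x.2.1.1 i, x.2.1.2 i) ∈ Ds i) ∧
        ((fun i => (x.2.2.1.1 i, x.2.2.1.2 i)), x.2.2.2.1, x.2.2.2.2) ∈ DI}
    let L : Submodule ℝ (((∀ i, V i) × (∀ i, Module.Dual ℝ (V i))) ×
        ((∀ i, Fp i) × (∀ i, Module.Dual ℝ (Fp i))) ×
        ((∀ i, Fp i) × (∀ i, Module.Dual ℝ (Fp i))) × (F × Module.Dual ℝ F)) :=
      { carrier := {x | ∀ y ∈ S, B x y = 0}
        add_mem' := by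
          intro a b ha hb y hy
          rw [map_add, LinearMap.add_apply, ha y hy, hb y hy, add_zero]
        zero_mem' := by intro y hy; simp
        smul_mem' := by
          intro c a ha y hy
          rw [map_smul, LinearMap.smul_apply, ha y hy, smul_zero] }
    have hLS : ∀ x ∈ L, x ∈ S := by
      intro x hx
      refine ⟨fun i => (hDs' i _).2 fun q hq => ?_, (hDI' _).2 fun q hq => ?_⟩
      · have := hx ((Pi.single i q.1, Pi.single i q.2.1),
          (Pi.single i q.2.2.1, Pi.single i q.2.2.2), 0, 0) ⟨fun j => ?_, h0I⟩
        · rw [PHS.sum4_apply] at this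
          simp only [PHS.pr_single, map_zero] at this
          linarith
        · by_cases hj : j = i
          · subst hj
            simpa using hq
          · simpa [Pi.single_eq_of_ne hj] using h0 j
      · have := hx (0, 0, (fun i => (q.1 i).1, fun i => (q.1 i).2), q.2) ⟨fun j => h0 j, hq⟩
        rw [PHS.sum4_apply, PHS.pr_apply Fp x.2.2.1, PHS.pr1_apply] at this
        simp only [map_zero] at this
        simp only
        linarith
    have hSL : ∀ x ∈ S, x ∈ L := by
      intro x hx y hy
      have a := fun i => (hDs' i _).1 (hx.1 i) _ (hy.1 i)
      have b := (hDI' _).1 hx.2 _ hy.2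
      have a' := Finset.sum_congr (rfl : (Finset.univ : Finset (Fin N)) = _) fun i _ => a i
      simp only [B, PHS.sum4_apply, PHS.pr_apply, PHS.pr1_apply]
      simp only [Finset.sum_add_distrib, Finset.sum_const_zero] at a' b ⊢
      linarith
    let C : Submodule ℝ (((∀ i, V i) × (∀ i, Module.Dual ℝ (V i))) ×
        ((∀ i, Fp i) × (∀ i, Module.Dual ℝ (Fp i))) ×
        ((∀ i, Fp i) × (∀ i, Module.Dual ℝ (Fp i))) × (F × Module.Dual ℝ F)) :=
      { carrier := {x | x.2.1.1 = -x.2.2.1.1 ∧ x.2.1.2 = x.2.2.1.2}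
        add_mem' := by
          rintro a b ⟨h1, h2⟩ ⟨h3, h4⟩
          refine ⟨?_, ?_⟩
          · simp [h1, h3, add_comm]
          · simp [h2, h4]
        zero_mem' := by simp
        smul_mem' := by
          rintro c a ⟨h1, h2⟩
          refine ⟨?_, ?_⟩
          · simp [h1]
          · simp [h2] }
    have hB : ∀ x, (∀ y, B x y = 0) → x = 0 := by
      intro x hx
      refine Prod.ext (PHS.pr_nondeg V _ fun q => ?_) (Prod.ext (PHS.pr_nondeg Fp _ fun q => ?_)
        (Prod.ext (PHS.pr_nondeg Fp _ fun q => ?_) (PHS.pr1_nondeg F _ fun q => ?_)))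
      · simpa [B, PHS.sum4_apply] using hx (q, 0, 0, 0)
      · simpa [B, PHS.sum4_apply] using hx (0, q, 0, 0)
      · simpa [B, PHS.sum4_apply] using hx (0, 0, q, 0)
      · simpa [B, PHS.sum4_apply] using hx (0, 0, 0, q)
    obtain ⟨d, hdL, hd⟩ := PHS.reduction B hB L C
      (fun x hx y hy => hx y (hSL y hy)) ((p.1, p.2.1), 0, 0, p.2.2) (by
        intro y hyL hyC
        have hyS := hLS y hyL
        have key := hp (y.1.1, y.1.2, y.2.2.2) ⟨y.2.2.1.1, y.2.2.1.2, fun i => by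
          have := hyS.1 i
          rw [hyC.1, hyC.2] at this
          exact this, hyS.2⟩
        simp only [B, PHS.sum4_apply, map_zero, LinearMap.zero_apply]
        rw [PHS.pr_apply, PHS.pr1_apply]
        simp only at key ⊢
        linarith)
    have e1 : (p.1, p.2.1) - d.1 = 0 := PHS.pr_nondeg V _ fun q => by
      simpa [B, PHS.sum4_apply] using hd (q, 0, 0, 0) (by simp [C])
    have e2 : p.2.2 - d.2.2.2 = 0 := PHS.pr1_nondeg F _ fun q => by
      simpa [B, PHS.sum4_apply] using hd (0, 0, 0, q) (by simp [C])
    have e3 : (d.2.1.1 + d.2.2.1.1, d.2.2.1.2 - d.2.1.2) = 0 := PHS.pr_nondeg Fp _ fun q => by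
      have := hd (0, (-q.1, q.2), q, 0) ⟨rfl, rfl⟩
      simp only [B, PHS.sum4_apply, map_zero, PHS.pr_apply Fp] at this
      rw [PHS.pr_apply]
      simp [Finset.sum_add_distrib] at this ⊢
      linarith
    have hdS := hLS d hdL
    obtain ⟨e3a, e3b⟩ := Prod.ext_iff.1 e3
    have f1 : d.2.1.1 = -d.2.2.1.1 := eq_neg_of_add_eq_zero_left e3a
    have f2 : d.2.2.1.2 = d.2.1.2 := sub_eq_zero.1 e3b
    have g1 := sub_eq_zero.1 e1
    have g2 := sub_eq_zero.1 e2
    refine ⟨d.2.2.1.1, d.2.2.1.2, fun i => ?_, ?_⟩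
    · have := hdS.1 i
      rw [f1, ← f2, ← g1] at this
      exact this
    · have := hdS.2
      rw [← g2] at this
      exact this
end
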